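/- arXiv:1808.09556 — 7 statements merged into one kernel-verified Lean document; each statement's English description precedes it below -/
import Mathlib

section
/- There exists α₀ ∈ (0,1) such that for all α ∈ (0, α₀): (α²/2)·(1 − √α)·χ²(Q1‖Q0) ≤ D((1−α)Q0 + αQ1 ‖ Q0) ≤ (α²/2)·(1 + √α)·χ²(Q1‖Q0). -/
/-!
Writing `P = (1 - α) Q0 + α Q1` and `u z = α (Q1 z / Q0 z - 1)`, one has
`P z * log (P z / Q0 z) = Q0 z * (1 + u z) * log (1 + u z)`, and Taylor expansion
gives `(1 + u) log (1 + u) = u + u² / 2 + O(|u|³)` (`abs_one_add_mul_log_sub_le`).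
The linear terms sum to `α (∑ Q1 - ∑ Q0) = 0` and the quadratic ones to `α² / 2 * χ²`.
Since `Z` is finite, `|u| ≤ M α` for a uniform `M`, so once `8 M √α ≤ 1` the cubic
remainder is at most `√α * u² / 2` pointwise (`abs_klTerm_sub_le`), and summing over `z`
gives both bounds.
-/

open Finset

/-- Kullback–Leibler divergence between two pmfs on a finite set
(natural logarithm, convention `0 log 0 = 0`). -/
noncomputable def KLdiv {Z : Type*} [Fintype Z] (P Q : Z → ℝ) : ℝ :=
  ∑ z, P z * Real.log (P z / Q z)

/-- Chi-squared distance between two pmfs on a finite set. -/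
noncomputable def chiSq {Z : Type*} [Fintype Z] (P Q : Z → ℝ) : ℝ :=
  ∑ z, (P z - Q z) ^ 2 / Q z

theorem abs_one_add_mul_log_sub_le {u : ℝ} (hu : |u| ≤ 1 / 2) :
    |(1 + u) * Real.log (1 + u) - (u + u ^ 2 / 2)| ≤ 4 * |u| ^ 3 := by
  have hlog : |Real.log (1 + u) - (u - u ^ 2 / 2)| ≤ 2 * |u| ^ 3 := by
    have h := Real.abs_log_sub_add_sum_range_le (x := -u) (by rw [abs_neg]; linarith) 2
    rw [abs_neg] at h
    have hdiv : |u| ^ (2 + 1) / (1 - |u|) ≤ 2 * |u| ^ 3 := by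
      rw [div_le_iff₀ (by linarith)]
      calc |u| ^ 3 = 2 * |u| ^ 3 * (1 / 2) := by ring
        _ ≤ 2 * |u| ^ 3 * (1 - |u|) := by gcongr; linarith
    refine le_trans (le_of_eq ?_) (h.trans hdiv)
    congr 1
    simp only [Finset.sum_range_succ, Finset.sum_range_zero, sub_neg_eq_add]
    push_cast
    ring
  have hsplit : (1 + u) * Real.log (1 + u) - (u + u ^ 2 / 2)
      = (1 + u) * (Real.log (1 + u) - (u - u ^ 2 / 2)) + -(u ^ 3 / 2) := by ring
  have hone : |1 + u| ≤ 3 / 2 := by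
    have := abs_add_le 1 u
    rw [abs_one] at this
    linarith
  rw [hsplit]
  refine (abs_add_le _ _).trans ?_
  rw [abs_mul, abs_neg, abs_div, abs_pow, abs_two]
  have := mul_le_mul hone hlog (abs_nonneg _) (by norm_num)
  linarith [pow_nonneg (abs_nonneg u) 3]

/-- The contribution of a point with masses `p = Q0 z`, `q = Q1 z` to the divergence agrees with
its second-order expansion up to a relative error `√α` in the quadratic term. -/
theorem abs_klTerm_sub_le {p q α : ℝ} (hp : 0 < p) (hα : 0 < α) (hα1 : α < 1)
    (h : 8 * (α * |q / p - 1|) ≤ √α) :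
    |((1 - α) * p + α * q) * Real.log (((1 - α) * p + α * q) / p)
      - (α * (q - p) + α ^ 2 / 2 * ((q - p) ^ 2 / p))|
      ≤ α ^ 2 / 2 * √α * ((q - p) ^ 2 / p) := by
  obtain ⟨u, hu⟩ : ∃ u, u = α * (q / p - 1) := ⟨_, rfl⟩
  have habs : |u| = α * |q / p - 1| := by rw [hu, abs_mul, abs_of_pos hα]
  rw [← habs] at h
  have hs1 : √α ≤ 1 := Real.sqrt_le_one.mpr hα1.le
  have hmix : (1 - α) * p + α * q = p * (1 + u) := by rw [hu]; field_simp; ring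
  have hlin : α * (q - p) = p * u := by rw [hu]; field_simp
  have hquad : α ^ 2 * ((q - p) ^ 2 / p) = p * u ^ 2 := by rw [hu]; field_simp
  have hratio : p * (1 + u) / p = 1 + u := by field_simp
  rw [hmix, hratio, hlin]
  have hfactor : p * (1 + u) * Real.log (1 + u) - (p * u + α ^ 2 / 2 * ((q - p) ^ 2 / p))
      = p * ((1 + u) * Real.log (1 + u) - (u + u ^ 2 / 2)) := by
    linear_combination (-1 / 2) * hquad
  rw [hfactor, abs_mul, abs_of_pos hp]
  have hcubic : 4 * |u| ^ 3 ≤ √α * (u ^ 2 / 2) := by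
    have := mul_le_mul_of_nonneg_right h (sq_nonneg |u|)
    rw [← sq_abs u]
    linarith
  calc p * |(1 + u) * Real.log (1 + u) - (u + u ^ 2 / 2)|
      ≤ p * (√α * (u ^ 2 / 2)) := by
        gcongr
        exact (abs_one_add_mul_log_sub_le (by linarith)).trans hcubic
    _ = α ^ 2 / 2 * √α * ((q - p) ^ 2 / p) := by
        linear_combination (-√α / 2) * hquad

/-- for all small enough `α > 0`,
`(α²/2)(1−√α) χ²(Q1‖Q0) ≤ D((1−α)Q0+αQ1 ‖ Q0) ≤ (α²/2)(1+√α) χ²(Q1‖Q0)`. -/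
theorem stmt_1 {Z : Type*} [Fintype Z] [Nonempty Z]
    (Q0 Q1 : Z → ℝ)
    (hQ0pos : ∀ z, 0 < Q0 z) (hQ1pos : ∀ z, 0 < Q1 z)
    (hQ0sum : ∑ z, Q0 z = 1) (hQ1sum : ∑ z, Q1 z = 1)
    (hQne : Q0 ≠ Q1) :
    ∃ α₀ ∈ Set.Ioo (0:ℝ) 1, ∀ α ∈ Set.Ioo (0:ℝ) α₀,
      (α ^ 2 / 2) * (1 - Real.sqrt α) * chiSq Q1 Q0
          ≤ KLdiv (fun z => (1 - α) * Q0 z + α * Q1 z) Q0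
      ∧ KLdiv (fun z => (1 - α) * Q0 z + α * Q1 z) Q0
          ≤ (α ^ 2 / 2) * (1 + Real.sqrt α) * chiSq Q1 Q0 := by
  obtain ⟨M, hM⟩ : ∃ M, M = 1 + ∑ z, |Q1 z / Q0 z - 1| := ⟨_, rfl⟩
  have hM1 : 1 ≤ M := by
    have : 0 ≤ ∑ z, |Q1 z / Q0 z - 1| := Finset.sum_nonneg fun z _ => abs_nonneg _
    linarith
  have hle : ∀ z, |Q1 z / Q0 z - 1| ≤ M := fun z => by
    have := Finset.single_le_sum (f := fun z => |Q1 z / Q0 z - 1|)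
      (fun z _ => abs_nonneg _) (Finset.mem_univ z)
    linarith
  -- `α < (1 / (8 M))²` is exactly what makes `8 M α ≤ √α`.
  refine ⟨(1 / (8 * M)) ^ 2, ⟨by positivity, ?_⟩, ?_⟩
  · rw [div_pow, one_pow, div_lt_one (by positivity)]
    nlinarith
  rintro α ⟨hα, hα₀⟩
  have hs : √α ≤ 1 / (8 * M) := Real.sqrt_le_iff.mpr ⟨by positivity, hα₀.le⟩
  have hs8 : √α * (8 * M) ≤ 1 := (le_div_iff₀ (by positivity)).mp hs
  have hss : √α * √α = α := Real.mul_self_sqrt hα.le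
  have hs0 : 0 < √α := Real.sqrt_pos.mpr hα
  have hα1 : α < 1 := by nlinarith
  have key : |∑ z, (((1 - α) * Q0 z + α * Q1 z)
        * Real.log (((1 - α) * Q0 z + α * Q1 z) / Q0 z)
      - (α * (Q1 z - Q0 z) + α ^ 2 / 2 * ((Q1 z - Q0 z) ^ 2 / Q0 z)))|
      ≤ ∑ z, α ^ 2 / 2 * √α * ((Q1 z - Q0 z) ^ 2 / Q0 z) := by
    refine (Finset.abs_sum_le_sum_abs _ _).trans (Finset.sum_le_sum fun z _ => ?_)
    refine abs_klTerm_sub_le (hQ0pos z) hα hα1 ?_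
    calc 8 * (α * |Q1 z / Q0 z - 1|) ≤ 8 * (α * M) := by gcongr; exact hle z
      _ = √α * (√α * (8 * M)) := by linear_combination (-8 * M) * hss
      _ ≤ √α := mul_le_of_le_one_right hs0.le hs8
  rw [Finset.sum_sub_distrib, Finset.sum_add_distrib, ← Finset.mul_sum, ← Finset.mul_sum,
    ← Finset.mul_sum, Finset.sum_sub_distrib, hQ0sum, hQ1sum, abs_le] at key
  unfold KLdiv chiSq
  constructor
  · linarith [key.1]
  · linarith [key.2]
end

section
/- Let α_n, β_n ∈ (0,1) be sequences with lim_{n→∞} α_n = lim_{n→∞} β_n = 0. Then there exists N ∈ ℕ such that for all n ≥ N and all x̄ ∈ {0,1}ⁿ, writing λ_n = wt(x̄)/n, the divergence D(Q̄ⁿ_{x̄,α_n,β_n} ‖ Q̄ⁿ_{x̄,0,0}) is at most n·((1−λ_n)·(α_n²/2)·(1+√α_n)·χ²(Q1‖Q0) + λ_n·(β_n²/2)·(1+√β_n)·χ²(Q0‖Q1)) and at least n·((1−λ_n)·(α_n²/2)·(1−√α_n)·χ²(Q1‖Q0) + λ_n·(β_n²/2)·(1−√β_n)·χ²(Q0‖Q1)).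 -/
/-!
The divergence of product distributions is the sum of the per-letter divergences (`KLdiv_prod`),
so the claim reduces to one letter: `D((1-a)Q + aP ‖ Q)` must lie within a relative error `√a` of
`(a²/2) χ²(P‖Q)` for all small `a > 0` (`KLdiv_mix`). With `u = a (P - Q)/Q`, the divergence is
`∑ Q (1+u) log (1+u)`. The second-order expansion `(1+u) log (1+u) = u + u²/2 + O(|u|³)`
(`abs_mul_log_one_add_sub_le`) suffices: the linear term sums to zero, the quadratic term gives
`(a²/2) χ²(P‖Q)`, and since `u = O(a)` uniformly on the finite alphabet, the cubic error is at most
`√a · u²/2` once `a` is small.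
-/

open Finset

lemma abs_mul_log_one_add_sub_le {u : ℝ} (hu : |u| ≤ 1 / 2) :
    |(1 + u) * Real.log (1 + u) - u - u ^ 2 / 2| ≤ 4 * |u| ^ 3 := by
  have h := Real.abs_log_sub_add_sum_range_le (x := -u) (by rw [abs_neg]; linarith) 2
  simp only [abs_neg, Finset.sum_range_succ, Finset.sum_range_zero] at h
  norm_num at h
  have h2 : |u| ^ 3 / (1 - |u|) ≤ 2 * |u| ^ 3 := by
    rw [div_le_iff₀ (by linarith)]
    nlinarith [pow_nonneg (abs_nonneg u) 3]
  have h3 := h.trans h2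
  have e : (1 + u) * Real.log (1 + u) - u - u ^ 2 / 2
      = (1 + u) * (-u + u ^ 2 / 2 + Real.log (1 + u)) - u ^ 3 / 2 := by ring
  have h1 : |1 + u| ≤ 3 / 2 := by
    have := abs_add_le 1 u
    rw [abs_one] at this
    linarith
  rw [e]
  calc _ ≤ |(1 + u) * (-u + u ^ 2 / 2 + Real.log (1 + u))| + |u ^ 3 / 2| := abs_sub _ _
    _ ≤ 3 / 2 * (2 * |u| ^ 3) + |u| ^ 3 / 2 := by
      rw [abs_mul, abs_div, abs_pow, abs_two]
      gcongr
    _ ≤ _ := by linarith [pow_nonneg (abs_nonneg u) 3]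

/-- One-letter estimate: mixing a small fraction `a` of `P` into `Q` produces divergence
`(a²/2) χ²(P‖Q)` up to a relative error `√a`. -/
lemma KLdiv_mix {Z : Type*} [Fintype Z] (P Q : Z → ℝ) (hQ : ∀ z, 0 < Q z)
    (hPs : ∑ z, P z = 1) (hQs : ∑ z, Q z = 1) :
    ∃ δ > 0, ∀ a : ℝ, 0 < a → a < δ →
      |KLdiv (fun z => (1 - a) * Q z + a * P z) Q - a ^ 2 / 2 * chiSq P Q|
        ≤ a ^ 2 / 2 * √a * chiSq P Q := by
  set M : ℝ := ∑ z, |(P z - Q z) / Q z| with hM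
  have hM0 : 0 ≤ M := Finset.sum_nonneg fun _ _ => abs_nonneg _
  -- `δ` is chosen so that `a < δ` forces `8 M √a ≤ 1` and `√a ≤ 1`.
  refine ⟨(1 / (8 * M + 1)) ^ 2, by positivity, fun a ha had => ?_⟩
  have hs : √a ≤ 1 / (8 * M + 1) := by
    rw [← Real.sqrt_sq (show 0 ≤ 1 / (8 * M + 1) by positivity)]
    exact Real.sqrt_le_sqrt had.le
  rw [le_div_iff₀ (by positivity)] at hs
  have hs0 : 0 < √a := Real.sqrt_pos.2 ha
  have hsq : √a * √a = a := Real.mul_self_sqrt ha.le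
  have hs1 : √a ≤ 1 := by nlinarith
  have hlin : ∑ z, (a * (P z - Q z)) = 0 := by
    rw [← Finset.mul_sum, Finset.sum_sub_distrib, hPs, hQs]; ring
  have e : KLdiv (fun z => (1 - a) * Q z + a * P z) Q - a ^ 2 / 2 * chiSq P Q
      = ∑ z, (((1 - a) * Q z + a * P z) * Real.log (((1 - a) * Q z + a * P z) / Q z)
          - a * (P z - Q z) - a ^ 2 / 2 * ((P z - Q z) ^ 2 / Q z)) := by
    rw [Finset.sum_sub_distrib, Finset.sum_sub_distrib, hlin, ← Finset.mul_sum, sub_zero]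
    rfl
  rw [e, chiSq, Finset.mul_sum]
  refine (Finset.abs_sum_le_sum_abs _ _).trans (Finset.sum_le_sum fun z _ => ?_)
  have hq := hQ z
  have hq' := hq.ne'
  obtain ⟨u, hu⟩ : ∃ u, u = a * ((P z - Q z) / Q z) := ⟨_, rfl⟩
  have hzM : |(P z - Q z) / Q z| ≤ M :=
    Finset.single_le_sum (f := fun z => |(P z - Q z) / Q z|) (fun _ _ => abs_nonneg _)
      (Finset.mem_univ z)
  have hub : 8 * |u| ≤ √a := by
    rw [hu, abs_mul, abs_of_pos ha]
    calc 8 * (a * |(P z - Q z) / Q z|) ≤ 8 * (a * M) := by gcongr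
      _ = √a * (√a * (8 * M)) := by linear_combination (-8 * M) * hsq
      _ ≤ √a * 1 := by gcongr; linarith
      _ = √a := mul_one _
  have key := abs_mul_log_one_add_sub_le (u := u) (by linarith)
  have hr : ((1 - a) * Q z + a * P z) / Q z = 1 + u := by rw [hu]; field_simp; ring
  have hr' : (1 - a) * Q z + a * P z = Q z * (1 + u) := by rw [← hr]; field_simp
  have h1 : a * (P z - Q z) = Q z * u := by rw [hu]; field_simp
  have h2 : a ^ 2 * ((P z - Q z) ^ 2 / Q z) = Q z * u ^ 2 := by rw [hu]; field_simp
  have e2 : ((1 - a) * Q z + a * P z) * Real.log (((1 - a) * Q z + a * P z) / Q z)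
          - a * (P z - Q z) - a ^ 2 / 2 * ((P z - Q z) ^ 2 / Q z)
      = Q z * ((1 + u) * Real.log (1 + u) - u - u ^ 2 / 2) := by
    rw [hr, hr', h1]; linear_combination (-1 / 2) * h2
  have e3 : a ^ 2 / 2 * √a * ((P z - Q z) ^ 2 / Q z) = Q z * (√a / 2 * u ^ 2) := by
    linear_combination (√a / 2) * h2
  rw [e2, e3, abs_mul, abs_of_pos hq]
  refine mul_le_mul_of_nonneg_left (key.trans ?_) hq.le
  rw [← sq_abs u]
  nlinarith [sq_nonneg |u|]

/-- Integrating a function of a single coordinate against a product pmf. -/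
lemma sum_prod_mul_apply {Z ι : Type*} [Fintype Z] [Fintype ι] [DecidableEq ι]
    (P : ι → Z → ℝ) (hPs : ∀ i, ∑ z, P i z = 1) (i : ι) (f : Z → ℝ) :
    ∑ z : ι → Z, (∏ j, P j (z j)) * f (z i) = ∑ z, P i z * f z := by
  have h := Finset.prod_univ_sum (fun _ : ι => (Finset.univ : Finset Z))
    (fun j z => P j z * (if j = i then f z else 1))
  rw [Fintype.piFinset_univ] at h
  simp only [Finset.prod_mul_distrib, Finset.prod_ite_eq', Finset.mem_univ, if_true] at h
  rw [← h, Finset.prod_eq_single i]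
  · simp
  · intro j _ hj
    simp [hj, hPs]
  · simp

/-- Additivity of the divergence over product distributions. -/
lemma KLdiv_prod {Z ι : Type*} [Fintype Z] [Fintype ι] [DecidableEq ι]
    (P Q : ι → Z → ℝ) (hP : ∀ i z, 0 < P i z) (hQ : ∀ i z, 0 < Q i z)
    (hPs : ∀ i, ∑ z, P i z = 1) :
    KLdiv (fun z : ι → Z => ∏ i, P i (z i)) (fun z => ∏ i, Q i (z i))
      = ∑ i, KLdiv (P i) (Q i) := by
  simp only [KLdiv]
  simp_rw [← fun i => sum_prod_mul_apply P hPs i (fun z => Real.log (P i z / Q i z))]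
  rw [Finset.sum_comm]
  refine Finset.sum_congr rfl fun z _ => ?_
  rw [← Finset.mul_sum, ← Finset.prod_div_distrib, Real.log_prod]
  exact fun i _ => (div_pos (hP i _) (hQ i _)).ne'

/-- Lemma 1 of the paper: for vanishing sequences `α_n, β_n ∈ (0,1)`,
for all large `n` and every `x̄ ∈ {0,1}ⁿ` with `λ_n = wt(x̄)/n`, the KL divergence
`D(Q̄ⁿ_{x̄,α_n,β_n} ‖ Q̄ⁿ_{x̄,0,0})` lies between
`n((1−λ_n)(α_n²/2)(1∓√α_n)χ²(Q1‖Q0) + λ_n(β_n²/2)(1∓√β_n)χ²(Q0‖Q1))`. -/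
theorem stmt_2 {Z : Type*} [Fintype Z] [Nonempty Z]
    (Q0 Q1 : Z → ℝ)
    (hQ0pos : ∀ z, 0 < Q0 z) (hQ1pos : ∀ z, 0 < Q1 z)
    (hQ0sum : ∑ z, Q0 z = 1) (hQ1sum : ∑ z, Q1 z = 1)
    (hQne : Q0 ≠ Q1)
    (α β : ℕ → ℝ)
    (hα : ∀ n, α n ∈ Set.Ioo (0:ℝ) 1) (hβ : ∀ n, β n ∈ Set.Ioo (0:ℝ) 1)
    (hαlim : Filter.Tendsto α Filter.atTop (nhds 0))
    (hβlim : Filter.Tendsto β Filter.atTop (nhds 0)) :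
    ∃ N : ℕ, ∀ n ≥ N, ∀ xbar : Fin n → Bool,
      (fun lam : ℝ =>
        n * ((1 - lam) * (α n ^ 2 / 2) * (1 - Real.sqrt (α n)) * chiSq Q1 Q0
              + lam * (β n ^ 2 / 2) * (1 - Real.sqrt (β n)) * chiSq Q0 Q1)
          ≤ KLdiv
              (fun z : Fin n → Z => ∏ i, if xbar i then (1 - β n) * Q1 (z i) + β n * Q0 (z i)
                else (1 - α n) * Q0 (z i) + α n * Q1 (z i))
              (fun z : Fin n → Z => ∏ i, if xbar i then Q1 (z i) else Q0 (z i))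
        ∧ KLdiv
              (fun z : Fin n → Z => ∏ i, if xbar i then (1 - β n) * Q1 (z i) + β n * Q0 (z i)
                else (1 - α n) * Q0 (z i) + α n * Q1 (z i))
              (fun z : Fin n → Z => ∏ i, if xbar i then Q1 (z i) else Q0 (z i))
          ≤ n * ((1 - lam) * (α n ^ 2 / 2) * (1 + Real.sqrt (α n)) * chiSq Q1 Q0
              + lam * (β n ^ 2 / 2) * (1 + Real.sqrt (β n)) * chiSq Q0 Q1))
      (((Finset.univ.filter (fun i => xbar i = true)).card : ℝ) / n) := by
  obtain ⟨δ₀, hδ₀, h₀⟩ := KLdiv_mix Q1 Q0 hQ0pos hQ1sum hQ0sum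
  obtain ⟨δ₁, hδ₁, h₁⟩ := KLdiv_mix Q0 Q1 hQ1pos hQ0sum hQ1sum
  obtain ⟨N, hN⟩ := Filter.eventually_atTop.1
    (((hαlim.eventually_lt_const hδ₀).and (hβlim.eventually_lt_const hδ₁)).and
      (Filter.eventually_ge_atTop 1))
  refine ⟨N, fun n hn xbar => ?_⟩
  obtain ⟨⟨ha, hb⟩, hn1⟩ := hN n hn
  obtain ⟨ha0, ha1⟩ := hα n
  obtain ⟨hb0, hb1⟩ := hβ n
  have hA := abs_le.1 (h₀ _ ha0 ha)
  have hB := abs_le.1 (h₁ _ hb0 hb)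
  set A := KLdiv (fun z => (1 - α n) * Q0 z + α n * Q1 z) Q0 with hAdef
  set B := KLdiv (fun z => (1 - β n) * Q1 z + β n * Q0 z) Q1 with hBdef
  have hmix : ∀ (P Q : Z → ℝ) (a : ℝ), ∑ z, P z = 1 → ∑ z, Q z = 1 →
      ∑ z, ((1 - a) * Q z + a * P z) = 1 := by
    intro P Q a hP hQ
    rw [Finset.sum_add_distrib, ← Finset.mul_sum, ← Finset.mul_sum, hP, hQ]; ring
  have hK := KLdiv_prod
    (fun i z => if xbar i then (1 - β n) * Q1 z + β n * Q0 z
      else (1 - α n) * Q0 z + α n * Q1 z)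
    (fun i z => if xbar i then Q1 z else Q0 z)
    (by
      intro i z
      have := hQ0pos z
      have := hQ1pos z
      have := sub_pos.2 ha1
      have := sub_pos.2 hb1
      split_ifs <;> positivity)
    (by
      intro i z
      split_ifs
      exacts [hQ1pos z, hQ0pos z])
    (by
      intro i
      split_ifs
      exacts [hmix _ _ _ hQ0sum hQ1sum, hmix _ _ _ hQ1sum hQ0sum])
  have hletter : ∀ i, KLdiv
      (fun z => if xbar i then (1 - β n) * Q1 z + β n * Q0 z
        else (1 - α n) * Q0 z + α n * Q1 z)
      (fun z => if xbar i then Q1 z else Q0 z) = A + if xbar i then B - A else 0 := by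
    intro i
    cases xbar i <;> simp [hAdef, hBdef]
  simp only [hletter, Finset.sum_add_distrib, Finset.sum_const, Finset.card_univ,
    Fintype.card_fin, nsmul_eq_mul, ← Finset.sum_filter] at hK
  have hn0 : (0 : ℝ) < n := by exact_mod_cast hn1
  have hwn : ((Finset.univ.filter (fun i => xbar i = true)).card : ℝ) ≤ n := by
    exact_mod_cast (Finset.card_filter_le _ _).trans (by simp)
  have hw0 : (0 : ℝ) ≤ ((Finset.univ.filter (fun i => xbar i = true)).card : ℝ) := by positivity
  rw [hK]
  generalize ((Finset.univ.filter (fun i => xbar i = true)).card : ℝ) = w at hwn hw0 ⊢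
  have hdist : ∀ x y : ℝ, (n : ℝ) * ((1 - w / n) * x + w / n * y) = (n - w) * x + w * y := by
    intro x y
    field_simp
  have hnw := sub_nonneg.2 hwn
  simp only [mul_assoc (1 - w / (n : ℝ)), mul_assoc (w / (n : ℝ)), hdist]
  constructor
  · nlinarith [mul_le_mul_of_nonneg_left hA.1 hnw, mul_le_mul_of_nonneg_left hB.1 hw0]
  · nlinarith [mul_le_mul_of_nonneg_left hA.2 hnw, mul_le_mul_of_nonneg_left hB.2 hw0]
end

section
/- There exists α₀ ∈ (0,1) such that for all α ∈ [0, α₀]: D((1−α)Q0 + αQ1 ‖ Q0) ≤ (α²/2)·χ₂(Q1‖Q0) − (α³/6)·χ₃(Q1‖Q0) + (α⁴/3)·χ₄(Q1‖Q0). -/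
/-!
Write `u = α (Q1 z - Q0 z) / Q0 z`, which exceeds `-1` for `α ∈ [0, 1]`. Then the mixture at `z` is
`Q0 z * (1 + u)`, and the cubic bound `log (1 + u) ≤ u - u² / 2 + u³ / 3`, valid for all `u > -1`
(`log_one_add_le_cubic`), gives
`(1 + u) * log (1 + u) ≤ u + u² / 2 - u³ / 6 + u⁴ / 3`.
Multiplying by `Q0 z` and summing over `z`, the linear term vanishes because both pmfs sum to `1`,
and the other terms are exactly the three `χ`-terms. The inequality thus holds on all of `[0, 1]`,
and `α₀ = 1 / 2` is an arbitrary choice.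
-/

open Finset

/-- `χ_k(P‖Q) = Σ_z (P(z) − Q(z))^k / Q(z)^{k−1}`. -/
noncomputable def chiK {Z : Type*} [Fintype Z] (k : ℕ) (P Q : Z → ℝ) : ℝ :=
  ∑ z, (P z - Q z) ^ k / Q z ^ (k - 1)

/-- The defect `u - u² / 2 + u³ / 3 - log (1 + u)` has derivative `u³ / (1 + u)`, so its minimum over
`(-1, ∞)` is its value `0` at `u = 0`. -/
lemma log_one_add_le_cubic {u : ℝ} (hu : -1 < u) :
    Real.log (1 + u) ≤ u - u ^ 2 / 2 + u ^ 3 / 3 := by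
  let f : ℝ → ℝ := fun x => x - x ^ 2 / 2 + x ^ 3 / 3 - Real.log (1 + x)
  have hd : ∀ x, -1 < x → HasDerivAt f (x ^ 3 / (1 + x)) x := by
    intro x hx
    have hne : 1 + x ≠ 0 := by linarith
    have h := (((hasDerivAt_id x).sub (((hasDerivAt_id x).pow 2).div_const 2)).add
      (((hasDerivAt_id x).pow 3).div_const 3)).sub (((hasDerivAt_id x).const_add 1).log hne)
    refine h.congr_deriv ?_
    simp only [id, Nat.cast_ofNat]
    field_simp
    ring
  have hf0 : f 0 = 0 := by simp [f]
  suffices h : f 0 ≤ f u by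
    rw [hf0] at h
    simp only [f] at h
    linarith
  rcases le_total 0 u with h0 | h0
  · have hm : MonotoneOn f (Set.Icc 0 u) := by
      refine monotoneOn_of_deriv_nonneg (convex_Icc 0 u)
        (fun x hx => (hd x (by linarith [hx.1])).continuousAt.continuousWithinAt) ?_ ?_
      · intro x hx
        rw [interior_Icc] at hx
        exact (hd x (by linarith [hx.1])).differentiableAt.differentiableWithinAt
      · intro x hx
        rw [interior_Icc] at hx
        have hx0 := hx.1
        rw [(hd x (by linarith)).deriv]
        positivity
    exact hm ⟨le_rfl, h0⟩ ⟨h0, le_rfl⟩ h0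
  · have hm : AntitoneOn f (Set.Icc u 0) := by
      refine antitoneOn_of_deriv_nonpos (convex_Icc u 0)
        (fun x hx => (hd x (by linarith [hx.1])).continuousAt.continuousWithinAt) ?_ ?_
      · intro x hx
        rw [interior_Icc] at hx
        exact (hd x (by linarith [hx.1])).differentiableAt.differentiableWithinAt
      · intro x hx
        rw [interior_Icc] at hx
        rw [(hd x (by linarith [hx.1])).deriv]
        refine div_nonpos_of_nonpos_of_nonneg ?_ (by linarith [hx.1])
        exact (Odd.pow_nonpos_iff (by decide)).2 hx.2.le
    exact hm ⟨le_rfl, h0⟩ ⟨h0, le_rfl⟩ h0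

/-- The contribution of a single point `z`, with `a = Q0 z` and `b = Q1 z`. The linear term
`α * (b - a)` disappears only after summation over `z`. -/
lemma mixture_term_le {a b α : ℝ} (ha : 0 < a) (hb : 0 < b) (h0 : 0 ≤ α) (h1 : α ≤ 1) :
    ((1 - α) * a + α * b) * Real.log (((1 - α) * a + α * b) / a)
      ≤ α * (b - a) + (α ^ 2 / 2) * ((b - a) ^ 2 / a ^ (2 - 1))
        - (α ^ 3 / 6) * ((b - a) ^ 3 / a ^ (3 - 1))
        + (α ^ 4 / 3) * ((b - a) ^ 4 / a ^ (4 - 1)) := by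
  have hp : 0 < (1 - α) * a + α * b := by
    rcases h0.eq_or_lt with rfl | h
    · simpa using ha
    · have := mul_pos h hb
      have := mul_nonneg (sub_nonneg.2 h1) ha.le
      linarith
  have he : ((1 - α) * a + α * b) / a = 1 + α * (b - a) / a := by
    field_simp
    ring
  have hu : -1 < α * (b - a) / a := by
    have := div_pos hp ha
    linarith
  rw [he]
  refine (mul_le_mul_of_nonneg_left (log_one_add_le_cubic hu) hp.le).trans (le_of_eq ?_)
  norm_num
  field_simp
  ring

/-- for all small enough `α ≥ 0`,
`D((1−α)Q0+αQ1 ‖ Q0) ≤ (α²/2)χ₂(Q1‖Q0) − (α³/6)χ₃(Q1‖Q0) + (α⁴/3)χ₄(Q1‖Q0)`. -/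
theorem stmt_3 {Z : Type*} [Fintype Z] [Nonempty Z]
    (Q0 Q1 : Z → ℝ)
    (hQ0pos : ∀ z, 0 < Q0 z) (hQ1pos : ∀ z, 0 < Q1 z)
    (hQ0sum : ∑ z, Q0 z = 1) (hQ1sum : ∑ z, Q1 z = 1)
    (hQne : Q0 ≠ Q1) :
    ∃ α₀ ∈ Set.Ioo (0:ℝ) 1, ∀ α ∈ Set.Icc (0:ℝ) α₀,
      KLdiv (fun z => (1 - α) * Q0 z + α * Q1 z) Q0
        ≤ (α ^ 2 / 2) * chiK 2 Q1 Q0 - (α ^ 3 / 6) * chiK 3 Q1 Q0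
          + (α ^ 4 / 3) * chiK 4 Q1 Q0 := by
  refine ⟨1 / 2, by norm_num, fun α hα => ?_⟩
  have h := Finset.sum_le_sum fun z (_ : z ∈ Finset.univ) =>
    mixture_term_le (hQ0pos z) (hQ1pos z) hα.1 (by linarith [hα.2] : α ≤ 1)
  simp only [Finset.sum_add_distrib, Finset.sum_sub_distrib, ← Finset.mul_sum, hQ0sum, hQ1sum,
    sub_self, mul_zero, zero_add] at h
  exact h
end

section
/- There exists α₀ ∈ (0,1) such that for all α ∈ [0, α₀]: D((1−α)Q0 + αQ1 ‖ Q0) ≥ (α²/2)·χ₂(Q1‖Q0) − α³·((1/2)·χ₃(Q1‖Q0) − (2/3)·η₃(Q1‖Q0)) + (2α⁴/3)·η₄(Q1‖Q0). -/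
/-!
Put `x = α (Q1 z - Q0 z) / Q0 z`. Each term of the divergence is `Q0 z * ((1 + x) * log (1 + x))`,
and `α₀ = 1/4` guarantees `x ≥ -1/4`. There `log (1 + x)` is at least `x - x²/2` when `x ≥ 0` and at
least `x - x²/2 + 2x³/3` when `x ≤ 0`. Multiplying by `1 + x` gives exactly the terms of the claimed
bound, plus a linear term `Q0 z * x = α (Q1 z - Q0 z)`, which sums to zero over `z` (`term_bound`).
-/

open Finset

/-- `η_k(P‖Q) = Σ_{z : P(z) < Q(z)} (P(z) − Q(z))^k / Q(z)^{k−1}`. -/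
noncomputable def etaK {Z : Type*} [Fintype Z] (k : ℕ) (P Q : Z → ℝ) : ℝ :=
  ∑ z ∈ Finset.univ.filter (fun z => P z < Q z), (P z - Q z) ^ k / Q z ^ (k - 1)

lemma sub_sq_le_log_one_add {x : ℝ} (hx : 0 ≤ x) : x - x ^ 2 / 2 ≤ Real.log (1 + x) := by
  refine le_trans ?_ (Real.le_log_one_add_of_nonneg hx)
  rw [le_div_iff₀ (by linarith)]
  nlinarith [pow_nonneg hx 3]

/-- The Taylor expansion with the cubic coefficient `1/3` doubled: the extra `x³/3` absorbs the
remainder, which is at most `x⁴ / (1 - |x|) ≤ |x|³/3`. -/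
lemma sub_sq_add_cube_le_log_one_add {x : ℝ} (hx : x ≤ 0) (hx' : -(1 / 4) ≤ x) :
    x - x ^ 2 / 2 + 2 * x ^ 3 / 3 ≤ Real.log (1 + x) := by
  obtain ⟨y, rfl⟩ : ∃ y, x = -y := ⟨-x, by ring⟩
  have hy : 0 ≤ y := by linarith
  have h := Real.abs_log_sub_add_sum_range_le (x := y) (by rw [abs_of_nonneg hy]; linarith) 3
  rw [abs_of_nonneg hy] at h
  have h1 := (abs_le.mp h).1
  have h2 : y ^ (3 + 1) / (1 - y) ≤ y ^ 3 / 3 := by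
    rw [div_le_iff₀ (by linarith)]
    nlinarith [mul_nonneg (pow_nonneg hy 3) (by linarith : 0 ≤ 1 / 4 - y)]
  simp only [Finset.sum_range_succ, Finset.sum_range_zero] at h1
  norm_num at h1
  rw [← sub_eq_add_neg]
  norm_num at h2
  linarith

/-- The contribution of a single `z`, with `q = Q0 z` and `p = Q1 z`. -/
lemma term_bound {q p α : ℝ} (hq : 0 < q) (hp : 0 < p) (h0 : 0 ≤ α) (h1 : α ≤ 1 / 4) :
    α * (p - q) + (α ^ 2 / 2) * ((p - q) ^ 2 / q ^ (2 - 1))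
        - α ^ 3 * ((1 / 2) * ((p - q) ^ 3 / q ^ (3 - 1))
          - (2 / 3) * (if p < q then (p - q) ^ 3 / q ^ (3 - 1) else 0))
        + (2 * α ^ 4 / 3) * (if p < q then (p - q) ^ 4 / q ^ (4 - 1) else 0)
      ≤ ((1 - α) * q + α * p) * Real.log (((1 - α) * q + α * p) / q) := by
  obtain ⟨r, rfl⟩ : ∃ r, p = q * r := ⟨p / q, by field_simp⟩
  have hr : 0 < r := pos_of_mul_pos_right hp hq.le
  have e1 : (1 - α) * q + α * (q * r) = q * (1 + α * (r - 1)) := by ring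
  have e2 : q * (1 + α * (r - 1)) / q = 1 + α * (r - 1) := by field_simp
  have k2 : (q * r - q) ^ 2 / q ^ (2 - 1) = q * (r - 1) ^ 2 := by field_simp; ring
  have k3 : (q * r - q) ^ 3 / q ^ (3 - 1) = q * (r - 1) ^ 3 := by field_simp; ring
  have k4 : (q * r - q) ^ 4 / q ^ (4 - 1) = q * (r - 1) ^ 4 := by field_simp; ring
  have hx : -(1 / 4) ≤ α * (r - 1) := by nlinarith [mul_nonneg h0 hr.le]
  have hw : 0 ≤ q * (1 + α * (r - 1)) := mul_nonneg hq.le (by linarith)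
  rw [e1, e2, k2, k3, k4]
  split_ifs with h
  · have hr1 : r ≤ 1 := by nlinarith
    have := mul_le_mul_of_nonneg_left (sub_sq_add_cube_le_log_one_add
      (mul_nonpos_of_nonneg_of_nonpos h0 (by linarith : r - 1 ≤ 0)) hx) hw
    refine le_trans (le_of_eq ?_) this
    ring
  · have hr1 : 1 ≤ r := by nlinarith
    have := mul_le_mul_of_nonneg_left (sub_sq_le_log_one_add
      (mul_nonneg h0 (by linarith : 0 ≤ r - 1))) hw
    refine le_trans (le_of_eq ?_) this
    ring

/-- for all small enough `α ≥ 0`,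
`D((1−α)Q0+αQ1 ‖ Q0) ≥ (α²/2)χ₂(Q1‖Q0) − α³((1/2)χ₃(Q1‖Q0) − (2/3)η₃(Q1‖Q0)) + (2α⁴/3)η₄(Q1‖Q0)`. -/
theorem stmt_4 {Z : Type*} [Fintype Z] [Nonempty Z]
    (Q0 Q1 : Z → ℝ)
    (hQ0pos : ∀ z, 0 < Q0 z) (hQ1pos : ∀ z, 0 < Q1 z)
    (hQ0sum : ∑ z, Q0 z = 1) (hQ1sum : ∑ z, Q1 z = 1)
    (hQne : Q0 ≠ Q1) :
    ∃ α₀ ∈ Set.Ioo (0:ℝ) 1, ∀ α ∈ Set.Icc (0:ℝ) α₀,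
      (α ^ 2 / 2) * chiK 2 Q1 Q0
          - α ^ 3 * ((1 / 2) * chiK 3 Q1 Q0 - (2 / 3) * etaK 3 Q1 Q0)
          + (2 * α ^ 4 / 3) * etaK 4 Q1 Q0
        ≤ KLdiv (fun z => (1 - α) * Q0 z + α * Q1 z) Q0 := by
  refine ⟨1 / 4, by norm_num, fun α ⟨h0, h1⟩ => ?_⟩
  have hlin : ∑ z, α * (Q1 z - Q0 z) = 0 := by
    rw [← Finset.mul_sum, Finset.sum_sub_distrib, hQ0sum, hQ1sum, sub_self, mul_zero]
  have h := Finset.sum_le_sum fun z (_ : z ∈ Finset.univ) =>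
    term_bound (hQ0pos z) (hQ1pos z) h0 h1
  simp only [Finset.sum_add_distrib, Finset.sum_sub_distrib, ← Finset.mul_sum] at h hlin
  rw [hlin, zero_add] at h
  simpa only [KLdiv, chiK, etaK, Finset.sum_filter] using h
end

section
/- The rescaled Kullback–Leibler divergence D((1−α)Q0 + αQ1 ‖ Q0)/α² converges, as α → 0⁺, to χ²(Q1‖Q0)/2. -/
/-!
Put `r z = (Q1 z - Q0 z) / Q0 z`, so that the mixture is `Q0 z * (1 + α * r z)`. Since both functions
sum to `1`, the first-order terms `∑ z, Q0 z * (α * r z)` vanish and may be subtracted from the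
divergence, which becomes `∑ z, Q0 z * ((1 + α * r z) * log (1 + α * r z) - α * r z)`.
Divided by `α ^ 2`, each summand tends to `Q0 z * (r z ^ 2 / 2)` by L'Hôpital's rule
(`tendsto_mul_log_sub_div_sq`), and these limits sum to `chiSq Q1 Q0 / 2`.
-/

open Finset

/-- The second-order expansion of `(1 + x) * log (1 + x)` at `x = 0`, along `x = α * r`. -/
theorem tendsto_mul_log_sub_div_sq (r : ℝ) :
    Filter.Tendsto
      (fun α : ℝ => ((1 + α * r) * Real.log (1 + α * r) - α * r) / α ^ 2)
      (nhdsWithin 0 (Set.Ioi 0)) (nhds (r ^ 2 / 2)) := by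
  have hlin : ∀ α : ℝ, HasDerivAt (fun α : ℝ => 1 + α * r) r α := fun α => by
    simpa using ((hasDerivAt_id α).mul_const r).const_add 1
  have hpos : ∀ᶠ α : ℝ in nhds 0, 0 < 1 + α * r :=
    (hlin 0).continuousAt.eventually (lt_mem_nhds (by simp))
  have hlog : ∀ α : ℝ, 0 < 1 + α * r →
      HasDerivAt (fun α : ℝ => Real.log (1 + α * r)) (r / (1 + α * r)) α :=
    fun α h => (hlin α).log h.ne'
  have hf : ∀ α : ℝ, 0 < 1 + α * r →
      HasDerivAt (fun α : ℝ => (1 + α * r) * Real.log (1 + α * r) - α * r)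
        (r * Real.log (1 + α * r)) α := fun α h => by
    have h1 := ((hlin α).mul (hlog α h)).sub ((hasDerivAt_id α).mul_const r)
    refine h1.congr_deriv ?_
    rw [mul_div_cancel₀ _ h.ne']
    ring
  refine HasDerivAt.lhopital_zero_nhdsGT
    (f' := fun α => r * Real.log (1 + α * r)) (g' := fun α => 2 * α) ?_ ?_ ?_ ?_ ?_ ?_
  · exact (hpos.mono hf).filter_mono nhdsWithin_le_nhds
  · exact Filter.Eventually.of_forall fun α => by simpa using hasDerivAt_pow 2 α
  · filter_upwards [self_mem_nhdsWithin] with α hα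
    exact mul_ne_zero two_ne_zero (ne_of_gt hα)
  · simpa using (hf 0 (by simp)).continuousAt.tendsto.mono_left
      (nhdsWithin_le_nhds (s := Set.Ioi (0 : ℝ)))
  · simpa using ((continuous_pow 2 (M := ℝ)).tendsto 0).mono_left
      (nhdsWithin_le_nhds (s := Set.Ioi (0 : ℝ)))
  -- The quotient of derivatives is `r / 2` times the slope of `log (1 + α * r)` at `α = 0`.
  · have hs := (hasDerivAt_iff_tendsto_slope_left_right.1 (hlog 0 (by simp))).2.const_mul (r / 2)
    convert hs using 2
    · rename_i α
      simp only [slope, vsub_eq_sub, smul_eq_mul, sub_zero, zero_mul, add_zero, Real.log_one]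
      rw [div_eq_mul_inv, mul_inv]
      ring
    · simp
      ring

/-- `D((1−α)Q0 + αQ1 ‖ Q0)/α² → χ²(Q1‖Q0)/2` as `α → 0⁺`. -/
theorem stmt_5 {Z : Type*} [Fintype Z] [Nonempty Z]
    (Q0 Q1 : Z → ℝ)
    (hQ0pos : ∀ z, 0 < Q0 z) (hQ1pos : ∀ z, 0 < Q1 z)
    (hQ0sum : ∑ z, Q0 z = 1) (hQ1sum : ∑ z, Q1 z = 1)
    (hQne : Q0 ≠ Q1) :
    Filter.Tendsto
      (fun α : ℝ => KLdiv (fun z => (1 - α) * Q0 z + α * Q1 z) Q0 / α ^ 2)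
      (nhdsWithin 0 (Set.Ioi 0)) (nhds (chiSq Q1 Q0 / 2)) := by
  have hsum : ∑ z, (Q1 z - Q0 z) = 0 := by
    rw [sum_sub_distrib, hQ0sum, hQ1sum, sub_self]
  have hKL : ∀ α : ℝ, KLdiv (fun z => (1 - α) * Q0 z + α * Q1 z) Q0 / α ^ 2 =
      ∑ z, Q0 z * (((1 + α * ((Q1 z - Q0 z) / Q0 z)) *
        Real.log (1 + α * ((Q1 z - Q0 z) / Q0 z)) - α * ((Q1 z - Q0 z) / Q0 z)) / α ^ 2) := by
    intro α
    have h0 : KLdiv (fun z => (1 - α) * Q0 z + α * Q1 z) Q0 =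
        KLdiv (fun z => (1 - α) * Q0 z + α * Q1 z) Q0 - α * ∑ z, (Q1 z - Q0 z) := by
      rw [hsum, mul_zero, sub_zero]
    rw [h0, KLdiv, mul_sum, ← sum_sub_distrib, sum_div]
    refine sum_congr rfl fun z _ => ?_
    have hz := (hQ0pos z).ne'
    have harg : ((1 - α) * Q0 z + α * Q1 z) / Q0 z = 1 + α * ((Q1 z - Q0 z) / Q0 z) := by
      field_simp
      ring
    have hmix : (1 - α) * Q0 z + α * Q1 z = Q0 z * (1 + α * ((Q1 z - Q0 z) / Q0 z)) := by
      rw [← harg, mul_div_cancel₀ _ hz]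
    have hlin : α * (Q1 z - Q0 z) = Q0 z * (α * ((Q1 z - Q0 z) / Q0 z)) := by
      field_simp
    rw [harg, hmix, hlin]
    ring
  have hchi : chiSq Q1 Q0 / 2 = ∑ z, Q0 z * (((Q1 z - Q0 z) / Q0 z) ^ 2 / 2) := by
    rw [chiSq, sum_div]
    refine sum_congr rfl fun z _ => ?_
    have hz := (hQ0pos z).ne'
    field_simp
  simp only [hKL, hchi]
  exact tendsto_finsetSum _ fun z _ => (tendsto_mul_log_sub_div_sq _).const_mul _
end

section
/- Let α_n, β_n ∈ (0,1) be sequences with lim_{n→∞} n·α_n² = 0 and lim_{n→∞} n·β_n² = 0. Then for every sequence of strings x̄⁽ⁿ⁾ ∈ {0,1}ⁿ, lim_{n→∞} D(Q̄ⁿ_{x̄⁽ⁿ⁾,α_n,β_n} ‖ Q̄ⁿ_{x̄⁽ⁿ⁾,0,0}) = 0. -/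
/-!
The inequalities `1 - 1/t ≤ log t ≤ t - 1` show that, for positive pmfs, the divergence `D(P‖Q)`
lies between `0` and the chi-square divergence `∑ P²/Q - 1` (`KLdiv_nonneg_of_sum_eq`,
`KLdiv_le_sum_sq_div`). The sum `∑ P²/Q` is multiplicative over product distributions
(`sum_sq_div_prod`), and for the mixture `P = (1-a)Q + aR` it equals
`1 + a² ∑ (R-Q)²/Q` (`sum_sq_div_mix`). With `C0` and `C1` the constants obtained
from `(Q0, Q1)` and `(Q1, Q0)`, the divergence of the `n`-letter distributions is therefore at most
`(1 + α²C0 + β²C1)ⁿ - 1 ≤ exp (nα²C0 + nβ²C1) - 1`, uniformly in the string, and this tends to `0`.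
-/

open Finset

lemma KLdiv_nonneg_of_sum_eq {Y : Type*} [Fintype Y] (P Q : Y → ℝ) (hP : ∀ z, 0 < P z)
    (hQ : ∀ z, 0 < Q z) (h : ∑ z, P z = ∑ z, Q z) : 0 ≤ KLdiv P Q := by
  have key : ∑ z, (P z - Q z) ≤ KLdiv P Q := by
    refine Finset.sum_le_sum fun z _ => ?_
    have h1 := Real.one_sub_inv_le_log_of_pos (div_pos (hP z) (hQ z))
    calc P z - Q z = P z * (1 - (P z / Q z)⁻¹) := by
          have := (hP z).ne'
          field_simp
      _ ≤ _ := mul_le_mul_of_nonneg_left h1 (hP z).le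
  rw [Finset.sum_sub_distrib, h, sub_self] at key
  exact key

lemma KLdiv_le_sum_sq_div {Y : Type*} [Fintype Y] (P Q : Y → ℝ) (hP : ∀ z, 0 < P z)
    (hQ : ∀ z, 0 < Q z) (h : ∑ z, P z = 1) : KLdiv P Q ≤ ∑ z, P z ^ 2 / Q z - 1 := by
  rw [← h, ← Finset.sum_sub_distrib]
  refine Finset.sum_le_sum fun z _ => ?_
  have h1 := Real.log_le_sub_one_of_pos (div_pos (hP z) (hQ z))
  calc _ ≤ P z * (P z / Q z - 1) := mul_le_mul_of_nonneg_left h1 (hP z).le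
    _ = _ := by ring

lemma sum_prod_apply {Y : Type*} [Fintype Y] {n : ℕ} (f : Fin n → Y → ℝ) :
    ∑ z : Fin n → Y, ∏ i, f i (z i) = ∏ i, ∑ y, f i y := by
  rw [Finset.prod_univ_sum, Fintype.piFinset_univ]

lemma sum_sq_div_prod {Y : Type*} [Fintype Y] {n : ℕ} (P Q : Fin n → Y → ℝ) :
    ∑ z : Fin n → Y, (∏ i, P i (z i)) ^ 2 / ∏ i, Q i (z i) = ∏ i, ∑ y, P i y ^ 2 / Q i y := by
  rw [← sum_prod_apply (fun i y => P i y ^ 2 / Q i y)]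
  simp only [Finset.prod_div_distrib, Finset.prod_pow]

lemma sum_sq_div_mix {Y : Type*} [Fintype Y] (Q R : Y → ℝ) (a : ℝ) (hQ : ∀ z, 0 < Q z)
    (hQs : ∑ z, Q z = 1) (hRs : ∑ z, R z = 1) :
    ∑ z, ((1 - a) * Q z + a * R z) ^ 2 / Q z = 1 + a ^ 2 * ∑ z, (R z - Q z) ^ 2 / Q z := by
  have h : ∀ z, ((1 - a) * Q z + a * R z) ^ 2 / Q z
      = (Q z + 2 * a * (R z - Q z)) + a ^ 2 * ((R z - Q z) ^ 2 / Q z) := by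
    intro z
    have := (hQ z).ne'
    field_simp
    ring
  simp only [h, Finset.sum_add_distrib, ← Finset.mul_sum, Finset.sum_sub_distrib, hQs, hRs]
  ring

/-- A bound on the divergence of product distributions from letterwise chi-square bounds. -/
lemma KLdiv_prod_bounds {Y : Type*} [Fintype Y] {n : ℕ} (P Q : Fin n → Y → ℝ)
    (hP : ∀ i z, 0 < P i z) (hQ : ∀ i z, 0 < Q i z) (hPs : ∀ i, ∑ z, P i z = 1)
    (hQs : ∀ i, ∑ z, Q i z = 1) (c : ℝ) (hc : ∀ i, ∑ z, P i z ^ 2 / Q i z ≤ 1 + c) :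
    0 ≤ KLdiv (fun z : Fin n → Y => ∏ i, P i (z i)) (fun z => ∏ i, Q i (z i)) ∧
    KLdiv (fun z : Fin n → Y => ∏ i, P i (z i)) (fun z => ∏ i, Q i (z i))
      ≤ Real.exp (n * c) - 1 := by
  have hP' : ∀ z : Fin n → Y, 0 < ∏ i, P i (z i) := fun z => Finset.prod_pos fun i _ => hP i _
  have hQ' : ∀ z : Fin n → Y, 0 < ∏ i, Q i (z i) := fun z => Finset.prod_pos fun i _ => hQ i _
  have hPs' : ∑ z : Fin n → Y, ∏ i, P i (z i) = 1 := by simp [sum_prod_apply, hPs]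
  have hQs' : ∑ z : Fin n → Y, ∏ i, Q i (z i) = 1 := by simp [sum_prod_apply, hQs]
  refine ⟨KLdiv_nonneg_of_sum_eq _ _ hP' hQ' (hPs'.trans hQs'.symm), ?_⟩
  refine (KLdiv_le_sum_sq_div _ _ hP' hQ' hPs').trans ?_
  rw [sum_sq_div_prod]
  gcongr
  calc ∏ i, ∑ y, P i y ^ 2 / Q i y ≤ ∏ _i : Fin n, Real.exp c := by
        refine Finset.prod_le_prod (fun i _ => Finset.sum_nonneg fun y _ => ?_) fun i _ => ?_
        · exact div_nonneg (sq_nonneg _) (hQ i y).le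
        · linarith [hc i, Real.add_one_le_exp c]
    _ = Real.exp (n * c) := by simp [Real.exp_nat_mul]

/-- if `n·α_n² → 0` and `n·β_n² → 0`, then for every sequence of strings
`x̄⁽ⁿ⁾ ∈ {0,1}ⁿ`, `D(Q̄ⁿ_{x̄⁽ⁿ⁾,α_n,β_n} ‖ Q̄ⁿ_{x̄⁽ⁿ⁾,0,0}) → 0`. -/
theorem stmt_6 {Z : Type*} [Fintype Z] [Nonempty Z]
    (Q0 Q1 : Z → ℝ)
    (hQ0pos : ∀ z, 0 < Q0 z) (hQ1pos : ∀ z, 0 < Q1 z)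
    (hQ0sum : ∑ z, Q0 z = 1) (hQ1sum : ∑ z, Q1 z = 1)
    (hQne : Q0 ≠ Q1)
    (α β : ℕ → ℝ)
    (hα : ∀ n, α n ∈ Set.Ioo (0:ℝ) 1) (hβ : ∀ n, β n ∈ Set.Ioo (0:ℝ) 1)
    (hαlim : Filter.Tendsto (fun n : ℕ => (n : ℝ) * α n ^ 2) Filter.atTop (nhds 0))
    (hβlim : Filter.Tendsto (fun n : ℕ => (n : ℝ) * β n ^ 2) Filter.atTop (nhds 0))
    (xbar : (n : ℕ) → Fin n → Bool) :
    Filter.Tendsto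
      (fun n : ℕ =>
        KLdiv
          (fun z : Fin n → Z => ∏ i, if xbar n i then (1 - β n) * Q1 (z i) + β n * Q0 (z i)
            else (1 - α n) * Q0 (z i) + α n * Q1 (z i))
          (fun z : Fin n → Z => ∏ i, if xbar n i then Q1 (z i) else Q0 (z i)))
      Filter.atTop (nhds 0) := by
  set C0 : ℝ := ∑ z, (Q1 z - Q0 z) ^ 2 / Q0 z with hC0
  set C1 : ℝ := ∑ z, (Q0 z - Q1 z) ^ 2 / Q1 z with hC1
  have hC0n : 0 ≤ C0 := Finset.sum_nonneg fun z _ => div_nonneg (sq_nonneg _) (hQ0pos z).le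
  have hC1n : 0 ≤ C1 := Finset.sum_nonneg fun z _ => div_nonneg (sq_nonneg _) (hQ1pos z).le
  have hb := fun n => KLdiv_prod_bounds
    (fun i z => if xbar n i then (1 - β n) * Q1 z + β n * Q0 z else (1 - α n) * Q0 z + α n * Q1 z)
    (fun i z => if xbar n i then Q1 z else Q0 z)
    (by
      intro i z
      obtain ⟨ha0, ha1⟩ := hα n
      obtain ⟨hb0, hb1⟩ := hβ n
      have h0 := hQ0pos z
      have h1 := hQ1pos z
      have ha : 0 < 1 - α n := by linarith
      have hb : 0 < 1 - β n := by linarith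
      split_ifs <;> positivity)
    (by
      intro i z
      split_ifs
      exacts [hQ1pos z, hQ0pos z])
    (by
      intro i
      cases xbar n i <;> simp [Finset.sum_add_distrib, ← Finset.mul_sum, hQ0sum, hQ1sum])
    (by
      intro i
      cases xbar n i <;> simp [hQ0sum, hQ1sum])
    (α n ^ 2 * C0 + β n ^ 2 * C1)
    (by
      intro i
      have h0 := mul_nonneg (sq_nonneg (α n)) hC0n
      have h1 := mul_nonneg (sq_nonneg (β n)) hC1n
      cases xbar n i
      · simp only [Bool.false_eq_true, if_false]
        rw [sum_sq_div_mix Q0 Q1 (α n) hQ0pos hQ0sum hQ1sum]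
        linarith
      · simp only [if_true]
        rw [sum_sq_div_mix Q1 Q0 (β n) hQ1pos hQ1sum hQ0sum]
        linarith)
  have hlim : Filter.Tendsto
      (fun n : ℕ => Real.exp (n * (α n ^ 2 * C0 + β n ^ 2 * C1)) - 1) Filter.atTop (nhds 0) := by
    have h1 := (hαlim.mul_const C0).add (hβlim.mul_const C1)
    have h2 := ((Real.continuous_exp.tendsto _).comp h1).sub_const 1
    simp only [zero_mul, add_zero, Real.exp_zero, sub_self] at h2
    refine h2.congr fun n => ?_
    simp only [Function.comp_apply]
    ring_nf
  exact squeeze_zero (fun n => (hb n).1) (fun n => (hb n).2) hlim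
end

section
/- Let a, b, c, d > 0 and λ ∈ (0,1), and define f : [0,∞) → ℝ by f(γ) = √2·((1−λ)·a + λ·γ·b) / √((1−λ)·c + λ·γ²·d). Then f attains its maximum over [0,∞) at the unique point γ* = (b·c)/(a·d); that is, f is strictly increasing on [0, γ*], strictly decreasing on [γ*, ∞), and f(γ*) = sup_{γ ≥ 0} f(γ). -/
/-!
Write `N x = m a + l x b` and `D x = m c + l x² d` with `m = 1 - λ`, `l = λ`. For nonnegative
arguments `f x < f y` amounts to `N x² D y < N y² D x`, and the difference factors as
`N y² D x - N x² D y = (y - x) m l (m a (2bc - ad(x + y)) + l b (y (bc - adx) + x (bc - ady)))`.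
The last factor is positive when `x < y ≤ bc/(ad)` and negative when `bc/(ad) ≤ x < y`, which
gives both monotonicity claims without derivatives; the maximum statements follow.
-/

/-- Comparison of two values of `√2 N / √D` reduced to a polynomial inequality. -/
lemma ratio_lt_ratio {p q P Q : ℝ} (hq : 0 < q) (hP : 0 < P) (hQ : 0 < Q)
    (h : p ^ 2 * Q < q ^ 2 * P) :
    Real.sqrt 2 * p / Real.sqrt P < Real.sqrt 2 * q / Real.sqrt Q := by
  have hsq : p * Real.sqrt Q < q * Real.sqrt P := by
    apply lt_of_pow_lt_pow_left₀ 2 (by positivity)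
    rw [mul_pow, mul_pow, Real.sq_sqrt hQ.le, Real.sq_sqrt hP.le]
    exact h
  rw [div_lt_div_iff₀ (Real.sqrt_pos.2 hP) (Real.sqrt_pos.2 hQ), mul_assoc, mul_assoc]
  exact mul_lt_mul_of_pos_left hsq (by positivity)

open Set

/-- the objective
`f(γ) = √2((1−λ)a + λγb)/√((1−λ)c + λγ²d)` attains its maximum over `[0,∞)` at the
unique point `γ* = bc/(ad)`: it is strictly increasing on `[0,γ*]`, strictly
decreasing on `[γ*,∞)`, and `f(γ*)` is the greatest value of `f` on `[0,∞)`
(hence equals `sup_{γ ≥ 0} f(γ)`). -/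
theorem stmt_17 (a b c d : ℝ) (ha : 0 < a) (hb : 0 < b) (hc : 0 < c) (hd : 0 < d)
    (lam : ℝ) (hlam : lam ∈ Set.Ioo (0:ℝ) 1)
    (f : ℝ → ℝ)
    (hf : ∀ γ : ℝ, f γ = Real.sqrt 2 * ((1 - lam) * a + lam * γ * b) /
      Real.sqrt ((1 - lam) * c + lam * γ ^ 2 * d)) :
    StrictMonoOn f (Set.Icc 0 ((b * c) / (a * d)))
    ∧ StrictAntiOn f (Set.Ici ((b * c) / (a * d)))
    ∧ IsGreatest (f '' Set.Ici 0) (f ((b * c) / (a * d)))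
    ∧ f ((b * c) / (a * d)) = sSup (f '' Set.Ici 0) := by
  obtain ⟨hl, hl1⟩ := hlam
  have hm : 0 < 1 - lam := by linarith
  have had : 0 < a * d := by positivity
  have hg : 0 < (b * c) / (a * d) := by positivity
  have hN : ∀ x : ℝ, 0 ≤ x → 0 < (1 - lam) * a + lam * x * b := fun x hx => by positivity
  have hD : ∀ x : ℝ, 0 < (1 - lam) * c + lam * x ^ 2 * d := fun x => by positivity
  have key : ∀ x y : ℝ,
      ((1 - lam) * a + lam * y * b) ^ 2 * ((1 - lam) * c + lam * x ^ 2 * d)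
        - ((1 - lam) * a + lam * x * b) ^ 2 * ((1 - lam) * c + lam * y ^ 2 * d)
      = (y - x) * ((1 - lam) * lam) *
        ((1 - lam) * a * ((b * c - x * (a * d)) + (b * c - y * (a * d)))
          + lam * b * (y * (b * c - x * (a * d)) + x * (b * c - y * (a * d)))) := by
    intro x y
    ring
  have hmono : StrictMonoOn f (Set.Icc 0 ((b * c) / (a * d))) := by
    rintro x ⟨hx0, -⟩ y ⟨hy0, hyg⟩ hxy
    have hy : 0 ≤ b * c - y * (a * d) := sub_nonneg.2 ((le_div_iff₀ had).1 hyg)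
    have hx : 0 < b * c - x * (a * d) :=
      sub_pos.2 ((lt_div_iff₀ had).1 (hxy.trans_le hyg))
    rw [hf, hf]
    refine ratio_lt_ratio (hN y hy0) (hD x) (hD y) (sub_pos.1 ?_)
    rw [key]
    have := sub_pos.2 hxy
    positivity
  have hanti : StrictAntiOn f (Set.Ici ((b * c) / (a * d))) := by
    intro x hxg y hyg hxy
    have hx0 : 0 < x := hg.trans_le hxg
    have hy0 : 0 < y := hg.trans_le hyg
    have hx : 0 ≤ x * (a * d) - b * c := sub_nonneg.2 ((div_le_iff₀ had).1 hxg)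
    have hy : 0 < y * (a * d) - b * c :=
      sub_pos.2 ((div_lt_iff₀ had).1 (lt_of_le_of_lt hxg hxy))
    rw [hf, hf]
    refine ratio_lt_ratio (hN x hx0.le) (hD y) (hD x) (sub_pos.1 ?_)
    have hswap : ∀ s t u v : ℝ, (x - y) * s * (t * (-u + -v) + lam * b * (x * -u + y * -v))
        = (y - x) * s * (t * (u + v) + lam * b * (x * u + y * v)) := by
      intro s t u v
      ring
    rw [key, ← neg_sub (y * (a * d)), ← neg_sub (x * (a * d)), hswap]
    have := sub_pos.2 hxy
    positivity
  have hgreat : IsGreatest (f '' Set.Ici 0) (f ((b * c) / (a * d))) := by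
    refine ⟨⟨_, hg.le, rfl⟩, ?_⟩
    rintro _ ⟨x, hx, rfl⟩
    rcases le_total x ((b * c) / (a * d)) with h | h
    · exact hmono.monotoneOn ⟨hx, h⟩ ⟨hg.le, le_rfl⟩ h
    · exact hanti.antitoneOn Set.self_mem_Ici h h
  exact ⟨hmono, hanti, hgreat, hgreat.csSup_eq.symm⟩
end
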